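/- arXiv:2512.24599 — 2 statements merged into one kernel-verified Lean document; each statement's English description precedes it below -/
import Mathlib

section
/- Let σ be a real number with 0 ≤ σ ≤ 1/2. Then for every real b with 0 ≤ b ≤ 1 and every real c with −1 ≤ c ≤ 1, one has 1 ≤ b^{2σ} c² + 2 (1 − b c)^{2σ}. -/
theorem min_one_self_le_rpow {x s : ℝ} (hx : 0 ≤ x) (hs₀ : 0 ≤ s) (hs₁ : s ≤ 1) :
    min 1 x ≤ x ^ s := by
  rcases le_total x 1 with hx₁ | hx₁
  · exact (min_le_right 1 x).trans (Real.self_le_rpow_of_le_one hx hx₁ hs₁)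
  · exact (min_le_left 1 x).trans (Real.one_le_rpow hx₁ hs₀)

section OrderedRing

variable {R : Type*} [CommRing R] [LinearOrder R] [IsStrictOrderedRing R] {b : R}

theorem one_le_mul_sq_add_two_mul_one_sub_mul (hb₀ : 0 ≤ b) (hb₁ : b ≤ 1) (c : R) :
    1 ≤ b * c ^ 2 + 2 * (1 - b * c) := by
  have hdefect : 0 ≤ b * (1 - b) * c ^ 2 :=
    mul_nonneg (mul_nonneg hb₀ (sub_nonneg.mpr hb₁)) (sq_nonneg c)
  calc
    1 ≤ 1 + ((b * c - 1) ^ 2 + b * (1 - b) * c ^ 2) :=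
      le_add_of_nonneg_right (add_nonneg (sq_nonneg _) hdefect)
    _ = b * c ^ 2 + 2 * (1 - b * c) := by ring

theorem one_le_mul_sq_add_two_mul_min_one_one_sub_mul (hb₀ : 0 ≤ b) (hb₁ : b ≤ 1) (c : R) :
    1 ≤ b * c ^ 2 + 2 * min 1 (1 - b * c) := by
  rcases min_choice 1 (1 - b * c) with hmin | hmin <;> rw [hmin]
  · linarith [mul_nonneg hb₀ (sq_nonneg c)]
  · exact one_le_mul_sq_add_two_mul_one_sub_mul hb₀ hb₁ c

end OrderedRing

theorem stmt_4_general {s b c : ℝ} (hs₀ : 0 ≤ s) (hs₁ : s ≤ 1) (hb₀ : 0 ≤ b) (hb₁ : b ≤ 1)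
    (hbc : b * c ≤ 1) :
    1 ≤ b ^ s * c ^ 2 + 2 * (1 - b * c) ^ s :=
  calc
    1 ≤ b * c ^ 2 + 2 * min 1 (1 - b * c) :=
      one_le_mul_sq_add_two_mul_min_one_one_sub_mul hb₀ hb₁ c
    _ ≤ b ^ s * c ^ 2 + 2 * (1 - b * c) ^ s := by
      gcongr
      · exact Real.self_le_rpow_of_le_one hb₀ hb₁ hs₁
      · exact min_one_self_le_rpow (sub_nonneg.mpr hbc) hs₀ hs₁

/-- Key scalar inequality in Lemma B.2, part 1: for `0 ≤ σ ≤ 1/2`, `0 ≤ b ≤ 1` and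
`−1 ≤ c ≤ 1`, one has `1 ≤ b^{2σ} c² + 2 (1 − b c)^{2σ}`. -/
theorem stmt_4 (σ : ℝ) (hσ0 : 0 ≤ σ) (hσ1 : σ ≤ 1 / 2)
    (b : ℝ) (hb0 : 0 ≤ b) (hb1 : b ≤ 1)
    (c : ℝ) (hc0 : -1 ≤ c) (hc1 : c ≤ 1) :
    1 ≤ b ^ (2 * σ) * c ^ 2 + 2 * (1 - b * c) ^ (2 * σ) :=
  stmt_4_general (by linarith) (by linarith) hb0 hb1
    ((mul_le_of_le_one_right hb0 hc1).trans hb1)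
end

section
/- Let σ be a real number with 0 ≤ σ ≤ 1/2. Then for all real numbers r > 0, s > 0, and every real t with −1 ≤ t ≤ 1, one has (r^{2σ} + s^{2σ})² − 4 r^{2σ} s^{2σ} t² ≤ 2^{3−2σ} (r² + s² − 2 r s t)^{2σ}. -/
/-!
With `p = 2σ ∈ [0, 1]`, put `A = (r - s)²` and `B = 2rs(1 - t)`, so that
`r² + s² - 2rst = A + B`, and write the left-hand side as
`(r^p - s^p)² + 4 (rs)^p (1 - t²)`. Subadditivity of `x ↦ x^p` bounds the first term by `A^p`.
The second is at most `4 B^p`, because `1 - t² ≤ min (2(1 - t)) 1 ≤ (2(1 - t))^p`.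
Concavity gives `A^p + B^p ≤ 2^(1-p) (A + B)^p`, whence the bound `4 · 2^(1-p) (A + B)^p`.
-/

section RpowOfExponentLeOne

variable {p : ℝ}

lemma abs_rpow_sub_rpow_le_abs_sub_rpow (hp0 : 0 ≤ p) (hp1 : p ≤ 1) {x y : ℝ} (hx : 0 ≤ x)
    (hy : 0 ≤ y) : |x ^ p - y ^ p| ≤ |x - y| ^ p := by
  wlog hyx : y ≤ x generalizing x y
  · rw [abs_sub_comm, abs_sub_comm x]
    exact this hy hx (le_of_not_ge hyx)
  have hsubadd : x ^ p ≤ (x - y) ^ p + y ^ p := by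
    simpa using Real.rpow_add_le_add_rpow (sub_nonneg.2 hyx) hy hp0 hp1
  have hmono : y ^ p ≤ x ^ p := Real.rpow_le_rpow hy hyx hp0
  rw [abs_of_nonneg (sub_nonneg.2 hmono), abs_of_nonneg (sub_nonneg.2 hyx)]
  exact sub_le_iff_le_add.2 hsubadd

lemma sq_rpow_sub_rpow_le_sq_sub_rpow (hp0 : 0 ≤ p) (hp1 : p ≤ 1) {x y : ℝ} (hx : 0 ≤ x)
    (hy : 0 ≤ y) : (x ^ p - y ^ p) ^ 2 ≤ ((x - y) ^ 2) ^ p :=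
  calc (x ^ p - y ^ p) ^ 2 = |x ^ p - y ^ p| ^ 2 := (sq_abs _).symm
    _ ≤ (|x - y| ^ p) ^ 2 := by
      gcongr
      exact abs_rpow_sub_rpow_le_abs_sub_rpow hp0 hp1 hx hy
    _ = ((x - y) ^ 2) ^ p := by rw [Real.rpow_pow_comm (abs_nonneg _), sq_abs]

lemma rpow_add_rpow_le_two_rpow_mul_add_rpow (hp0 : 0 ≤ p) (hp1 : p ≤ 1) {x y : ℝ}
    (hx : 0 ≤ x) (hy : 0 ≤ y) : x ^ p + y ^ p ≤ 2 ^ (1 - p) * (x + y) ^ p := by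
  have hmidpoint : 1 / 2 * x ^ p + 1 / 2 * y ^ p ≤ (1 / 2 * x + 1 / 2 * y) ^ p :=
    (Real.concaveOn_rpow hp0 hp1).2 hx hy one_half_pos.le one_half_pos.le (add_halves 1)
  calc x ^ p + y ^ p = 2 * (1 / 2 * x ^ p + 1 / 2 * y ^ p) := by ring
    _ ≤ 2 * (1 / 2 * x + 1 / 2 * y) ^ p := by gcongr
    _ = 2 * ((x + y) / 2) ^ p := by ring_nf
    _ = 2 ^ (1 - p) * (x + y) ^ p := by
      rw [Real.div_rpow (add_nonneg hx hy) zero_le_two, Real.rpow_sub two_pos, Real.rpow_one]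
      ring

lemma min_self_one_le_rpow (hp0 : 0 ≤ p) (hp1 : p ≤ 1) {x : ℝ} (hx : 0 ≤ x) :
    min x 1 ≤ x ^ p := by
  rcases le_total x 1 with hx1 | hx1
  · exact min_le_of_left_le (Real.self_le_rpow_of_le_one hx hx1 hp1)
  · exact min_le_of_right_le (Real.one_le_rpow hx1 hp0)

lemma one_sub_sq_le_two_mul_one_sub_rpow (hp0 : 0 ≤ p) (hp1 : p ≤ 1) {t : ℝ} (ht : t ≤ 1) :
    1 - t ^ 2 ≤ (2 * (1 - t)) ^ p := by
  have hlinear : 1 - t ^ 2 ≤ 2 * (1 - t) := by linarith [sq_nonneg (1 - t)]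
  have hone : 1 - t ^ 2 ≤ 1 := sub_le_self 1 (sq_nonneg t)
  exact (le_min hlinear hone).trans (min_self_one_le_rpow hp0 hp1 (by linarith))

lemma rpow_mul_rpow_mul_one_sub_sq_le (hp0 : 0 ≤ p) (hp1 : p ≤ 1) {r s t : ℝ} (hr : 0 ≤ r)
    (hs : 0 ≤ s) (ht : t ≤ 1) :
    r ^ p * s ^ p * (1 - t ^ 2) ≤ (r * s * (2 * (1 - t))) ^ p := by
  rw [Real.mul_rpow (mul_nonneg hr hs) (by linarith), Real.mul_rpow hr hs]
  gcongr
  exact one_sub_sq_le_two_mul_one_sub_rpow hp0 hp1 ht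

end RpowOfExponentLeOne

theorem stmt_5_general {p : ℝ} (hp0 : 0 ≤ p) (hp1 : p ≤ 1) {r s t : ℝ} (hr : 0 ≤ r)
    (hs : 0 ≤ s) (ht : t ≤ 1) :
    (r ^ p + s ^ p) ^ 2 - 4 * r ^ p * s ^ p * t ^ 2
      ≤ 2 ^ (3 - p) * (r ^ 2 + s ^ 2 - 2 * r * s * t) ^ p := by
  have hB : 0 ≤ r * s * (2 * (1 - t)) := mul_nonneg (mul_nonneg hr hs) (by linarith)
  have htwo : (4 : ℝ) * 2 ^ (1 - p) = 2 ^ (3 - p) := by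
    rw [show 3 - p = 2 + (1 - p) by ring, Real.rpow_add two_pos]
    norm_num
  calc (r ^ p + s ^ p) ^ 2 - 4 * r ^ p * s ^ p * t ^ 2
      = (r ^ p - s ^ p) ^ 2 + 4 * (r ^ p * s ^ p * (1 - t ^ 2)) := by ring
    _ ≤ ((r - s) ^ 2) ^ p + 4 * (r * s * (2 * (1 - t))) ^ p := by
      gcongr ?_ + 4 * ?_
      · exact sq_rpow_sub_rpow_le_sq_sub_rpow hp0 hp1 hr hs
      · exact rpow_mul_rpow_mul_one_sub_sq_le hp0 hp1 hr hs ht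
    _ ≤ 4 * (((r - s) ^ 2) ^ p + (r * s * (2 * (1 - t))) ^ p) := by
      linarith [Real.rpow_nonneg (sq_nonneg (r - s)) p]
    _ ≤ 4 * (2 ^ (1 - p) * ((r - s) ^ 2 + r * s * (2 * (1 - t))) ^ p) := by
      gcongr
      exact rpow_add_rpow_le_two_rpow_mul_add_rpow hp0 hp1 (sq_nonneg _) hB
    _ = 2 ^ (3 - p) * (r ^ 2 + s ^ 2 - 2 * r * s * t) ^ p := by
      rw [← mul_assoc, htwo]
      congr 2
      ring

/-- Core real-variable inequality of Lemma B.2, part 1: for `0 ≤ σ ≤ 1/2`, `r, s > 0`,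
and `−1 ≤ t ≤ 1`,
`(r^{2σ} + s^{2σ})² − 4 r^{2σ} s^{2σ} t² ≤ 2^{3−2σ} (r² + s² − 2 r s t)^{2σ}`. -/
theorem stmt_5 (σ : ℝ) (hσ0 : 0 ≤ σ) (hσ1 : σ ≤ 1 / 2)
    (r s : ℝ) (hr : 0 < r) (hs : 0 < s)
    (t : ℝ) (ht0 : -1 ≤ t) (ht1 : t ≤ 1) :
    (r ^ (2 * σ) + s ^ (2 * σ)) ^ 2 - 4 * r ^ (2 * σ) * s ^ (2 * σ) * t ^ 2
      ≤ 2 ^ (3 - 2 * σ) * (r ^ 2 + s ^ 2 - 2 * r * s * t) ^ (2 * σ) :=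
  stmt_5_general (by linarith) (by linarith) hr.le hs.le ht1
end
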